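/- Let q = r^2 with r an odd prime power. Suppose q − 1 = e_1 f_1 = e_2 f_2, there exists an integer l ≥ 2 with e_1 ≡ 2^l (mod 2^{l+1}) and 2^l | e_2, and that 2e_2 | e_1(r−1) and e_1 | e_2(r+1). Let s, t be integers with 1 ≤ s ≤ D_1, 1 ≤ t ≤ D_2 and 4 | (s−1)(r+1), and set n_1 = s·f_1 + t·f_2. If n_1 is even, then there exists an MDS almost self-dual code over F_q of length n_1 + 1, i.e., a linear code C ⊆ F_q^{n_1+1} with dim C = n_1/2, C ⊆ C⊥, dim C⊥ = dim C + 1, and minimum Hamming distance n_1/2 + 2. -/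

import Mathlib

/-- The Euclidean dual of a linear code `C ⊆ F^n`. -/
def dualCode {F : Type*} [Field F] {n : ℕ} (C : Submodule F (Fin n → F)) :
    Submodule F (Fin n → F) where
  carrier := {x | ∀ c ∈ C, ∑ i, x i * c i = 0}
  add_mem' := by
    intro a b ha hb c hc
    simp only [Set.mem_setOf_eq] at ha hb ⊢
    simp [Pi.add_apply, add_mul, Finset.sum_add_distrib, ha c hc, hb c hc]
  zero_mem' := by intro c hc; simp
  smul_mem' := by
    intro r a ha c hc
    simp only [Set.mem_setOf_eq] at ha ⊢
    simp [Pi.smul_apply, smul_eq_mul, mul_assoc, ← Finset.mul_sum, ha c hc]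

/-- `C` has minimum Hamming distance `d`. -/
def IsMinDist {F : Type*} [Field F] [DecidableEq F] {n : ℕ}
    (C : Submodule F (Fin n → F)) (d : ℕ) : Prop :=
  (∀ c ∈ C, c ≠ 0 → d ≤ hammingNorm c) ∧ ∃ c ∈ C, c ≠ 0 ∧ hammingNorm c = d

/-! A generalized Reed-Solomon code with points `v` and multipliers
`w i ^ 2 = ∏_{j ≠ i} (v i - v j)⁻¹` is self-orthogonal, because `∑ i, w i ^ 2 * f (v i) * g (v i)`
is a top coefficient of a Lagrange interpolant. So it suffices to find a monic `P` of degree `n + 1`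
dividing `X ^ q - X` whose derivative is a square at each root of `P`.

With `eᵢ = Dᵢ g`, take `P = X ∏_{c ∈ T₁} (X ^ f₁ - c) ∏_{d ∈ T₂} (X ^ f₂ - d)`, where `T₁` consists
of `D₁`-th roots of `1` and `T₂` of `D₂`-th roots of `-1`. At a root `a` of `P` with `a ^ f₁ ∈ T₁`,
the power `a ^ f₂` is a `D₂`-th root of unity, hence lies in `𝔽_r`; at one with `a ^ f₂ ∈ T₂`, the
element `-a ^ f₁` is a `D₁`-th root of unity, as `D₁` is odd. Elements of `𝔽_r` are squares in
`𝔽_q`, and if the `(r + 1) / 2`-th powers of `a` and `b` are `1`, then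
`(a ± b) ^ r = ± (a b)⁻¹ (a ± b)`, which makes `a + b` a square, and also a product of `s - 1`
differences when `4 ∣ (s - 1) (r + 1)`. -/

open Polynomial Finset

section Codes

variable {F : Type*} [Field F]

/-- `C`, a code of odd length `n + 1`, is MDS and almost self-dual. -/
def IsMDSAlmostSelfDual [DecidableEq F] {n : ℕ} (C : Submodule F (Fin (n + 1) → F)) : Prop :=
  Module.finrank F C = n / 2 ∧
  C ≤ dualCode C ∧
  Module.finrank F (dualCode C) = Module.finrank F C + 1 ∧
  IsMinDist C (n / 2 + 2)

lemma dualCode_eq_orthogonal {n : ℕ} (C : Submodule F (Fin n → F)) :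
    dualCode C = (Matrix.toBilin' (1 : Matrix (Fin n) (Fin n) F)).orthogonal C := by
  ext x
  rw [LinearMap.BilinForm.mem_orthogonal_iff]
  refine forall₂_congr fun c _ => ?_
  simp [Matrix.toBilin'_apply', dotProduct, mul_comm]

lemma finrank_dualCode {n : ℕ} (C : Submodule F (Fin n → F)) :
    Module.finrank F (dualCode C) = n - Module.finrank F C := by
  have hB : (Matrix.toBilin' (1 : Matrix (Fin n) (Fin n) F)).Nondegenerate :=
    LinearMap.BilinForm.nondegenerate_toBilin'_of_det_ne_zero' _ (by simp)
  rw [dualCode_eq_orthogonal, LinearMap.BilinForm.finrank_orthogonal hB, Module.finrank_fin_fun]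

/-- The encoder of a generalized Reed-Solomon code: evaluation at the points `v i`, scaled by the
column multipliers `w i`. -/
noncomputable def grsEncoder {n : ℕ} (v w : Fin n → F) : F[X] →ₗ[F] (Fin n → F) :=
  LinearMap.pi fun i => w i • leval (v i)

/-- The generalized Reed-Solomon code of dimension `k` with evaluation points `v` and column
multipliers `w`. -/
noncomputable def grsCode {n : ℕ} (v w : Fin n → F) (k : ℕ) : Submodule F (Fin n → F) :=
  (degreeLT F k).map (grsEncoder v w)

variable {n : ℕ} {v w : Fin n → F} {k : ℕ}

@[simp]
lemma grsEncoder_apply (v w : Fin n → F) (p : F[X]) (i : Fin n) :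
    grsEncoder v w p i = w i * p.eval (v i) :=
  rfl

lemma lt_hammingNorm_grsEncoder_add [DecidableEq F] (hv : Function.Injective v)
    (hw : ∀ i, w i ≠ 0) {p : F[X]} (hp : p ∈ degreeLT F k) (hp0 : p ≠ 0) :
    n < hammingNorm (grsEncoder v w p) + k := by
  have hzeros : #{i | grsEncoder v w p i = 0} ≤ p.natDegree := by
    rw [← card_image_of_injective _ hv]
    refine (card_le_card fun x hx => ?_).trans ((Multiset.toFinset_card_le _).trans (card_roots' p))
    obtain ⟨i, hi, rfl⟩ := mem_image.1 hx
    simpa [hp0, hw i] using hi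
  have hdeg : p.natDegree < k := (natDegree_lt_iff_degree_lt hp0).2 (mem_degreeLT.1 hp)
  have hsplit : #{i | grsEncoder v w p i = 0} + hammingNorm (grsEncoder v w p) = n := by
    simpa [hammingNorm] using
      card_filter_add_card_filter_not (s := univ) fun i => grsEncoder v w p i = 0
  omega

lemma finrank_grsCode (hv : Function.Injective v) (hw : ∀ i, w i ≠ 0) (hk : k ≤ n) :
    Module.finrank F (grsCode v w k) = k := by
  classical
  have hinj : Function.Injective ((grsEncoder v w).domRestrict (degreeLT F k)) := by
    refine (injective_iff_map_eq_zero _).2 fun p hp => by_contra fun hp0 => ?_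
    have hweight := lt_hammingNorm_grsEncoder_add hv hw p.2 fun h => hp0 (Subtype.ext h)
    rw [LinearMap.domRestrict_apply] at hp
    rw [hp, hammingNorm_zero] at hweight
    omega
  rw [grsCode, ← LinearMap.range_domRestrict, LinearMap.finrank_range_of_inj hinj,
    (degreeLTEquiv F k).finrank_eq, Module.finrank_fin_fun]

lemma isMinDist_grsCode [DecidableEq F] (hv : Function.Injective v) (hw : ∀ i, w i ≠ 0)
    (hk0 : 0 < k) (hk : k ≤ n) : IsMinDist (grsCode v w k) (n + 1 - k) := by
  have hbound : ∀ c ∈ grsCode v w k, c ≠ 0 → n + 1 - k ≤ hammingNorm c := by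
    rintro _ ⟨p, hp, rfl⟩ hc
    have := lt_hammingNorm_grsEncoder_add hv hw hp fun h => hc (by rw [h, map_zero])
    omega
  obtain ⟨J, -, hJ⟩ : ∃ J ⊆ (univ : Finset (Fin n)), #J = k - 1 :=
    exists_subset_card_eq (by rw [card_fin]; omega)
  have hnodal : Lagrange.nodal J v ∈ degreeLT F k := by
    rw [mem_degreeLT, Lagrange.degree_nodal, hJ]
    exact_mod_cast Nat.sub_one_lt hk0.ne'
  have hne : grsEncoder v w (Lagrange.nodal J v) ≠ 0 := fun h => by
    have hweight := lt_hammingNorm_grsEncoder_add hv hw hnodal Lagrange.nodal_ne_zero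
    rw [h, hammingNorm_zero] at hweight
    omega
  have hmem : grsEncoder v w (Lagrange.nodal J v) ∈ grsCode v w k :=
    Submodule.mem_map_of_mem hnodal
  refine ⟨hbound, _, hmem, hne, le_antisymm ?_ (hbound _ hmem hne)⟩
  have hsupport : hammingNorm (grsEncoder v w (Lagrange.nodal J v)) ≤ #Jᶜ := by
    refine card_le_card fun i hi => mem_compl.2 fun hiJ => (mem_filter.1 hi).2 ?_
    rw [grsEncoder_apply, Lagrange.eval_nodal_at_node hiJ, mul_zero]
  rw [card_compl, Fintype.card_fin, hJ] at hsupport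
  omega

/- The sum `∑ wᵢ² p(vᵢ) q(vᵢ)` is the coefficient of degree `n - 1` of the Lagrange interpolant
of `p * q`, which is `p * q` itself and has smaller degree. -/
lemma grsCode_le_dualCode (hv : Function.Injective v)
    (hw : ∀ i, Lagrange.nodalWeight univ v i = w i * w i) (hk : 2 * k ≤ n) :
    grsCode v w k ≤ dualCode (grsCode v w k) := by
  rintro _ ⟨p, hp, rfl⟩ _ ⟨q, hq, rfl⟩
  rcases eq_or_ne p 0 with rfl | hp0
  · simp
  rcases eq_or_ne q 0 with rfl | hq0
  · simp
  have hdeg : (p * q).natDegree < n - 1 := by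
    have hp' := (natDegree_lt_iff_degree_lt hp0).2 (mem_degreeLT.1 hp)
    have hq' := (natDegree_lt_iff_degree_lt hq0).2 (mem_degreeLT.1 hq)
    rw [natDegree_mul hp0 hq0]
    omega
  have hdeg' : (p * q).degree < #(univ : Finset (Fin n)) := by
    rw [card_fin]
    exact degree_le_natDegree.trans_lt (by exact_mod_cast (by omega))
  calc ∑ i, grsEncoder v w p i * grsEncoder v w q i
      = ∑ i, (p * q).eval (v i) / ∏ j ∈ univ.erase i, (v i - v j) := by
        refine sum_congr rfl fun i _ => ?_
        have hwi : (∏ j ∈ univ.erase i, (v i - v j))⁻¹ = w i * w i := by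
          rw [← hw, Lagrange.nodalWeight, prod_inv_distrib]
        rw [grsEncoder_apply, grsEncoder_apply, div_eq_mul_inv, hwi, eval_mul]
        ring
    _ = (p * q).coeff (n - 1) := by
        rw [← Lagrange.coeff_eq_sum hv.injOn hdeg', card_fin]
    _ = 0 := coeff_eq_zero_of_natDegree_lt hdeg

lemma exists_isMDSAlmostSelfDual_of_isSquare_nodalWeight [DecidableEq F] (hn : Even n)
    (hn0 : 0 < n) {v : Fin (n + 1) → F} (hv : Function.Injective v)
    (hsq : ∀ i, IsSquare (Lagrange.nodalWeight univ v i)) :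
    ∃ C : Submodule F (Fin (n + 1) → F), IsMDSAlmostSelfDual C := by
  choose w hw using hsq
  have hw0 : ∀ i, w i ≠ 0 := fun i h =>
    Lagrange.nodalWeight_ne_zero hv.injOn (mem_univ i) (by rw [hw, h, mul_zero])
  obtain ⟨k, rfl⟩ := hn
  have hhalf : (k + k) / 2 = k := by omega
  have hrank : Module.finrank F (grsCode v w k) = k := finrank_grsCode hv hw0 (by omega)
  refine ⟨grsCode v w k, ?_, grsCode_le_dualCode hv hw (by omega), ?_, ?_⟩
  · rw [hrank, hhalf]
  · rw [finrank_dualCode, hrank]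
    omega
  · rw [hhalf, show k + 2 = k + k + 1 + 1 - k by omega]
    exact isMinDist_grsCode hv hw0 (by omega) (by omega)

lemma exists_isMDSAlmostSelfDual_of_isSquare_derivative_nodal [DecidableEq F] (hn : Even n)
    (hn0 : 0 < n) {S : Finset F} (hS : #S = n + 1)
    (hsq : ∀ a ∈ S, IsSquare ((derivative (Lagrange.nodal S id)).eval a)) :
    ∃ C : Submodule F (Fin (n + 1) → F), IsMDSAlmostSelfDual C := by
  let e : Fin (n + 1) ≃ S := (S.equivFinOfCardEq hS).symm
  have hnodal : Lagrange.nodal univ (fun i => (e i : F)) = Lagrange.nodal S id := by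
    rw [Lagrange.nodal_eq, Lagrange.nodal_eq, ← prod_coe_sort S]
    exact e.prod_comp fun a : S => X - C (a : F)
  refine exists_isMDSAlmostSelfDual_of_isSquare_nodalWeight hn hn0
    (Subtype.val_injective.comp e.injective) fun i => ?_
  rw [Lagrange.nodalWeight_eq_eval_derivative_nodal (mem_univ i)]
  exact (hnodal ▸ hsq _ (e i).2).inv

end Codes

section FiniteField

variable {F : Type*} [Field F] [Fintype F]

lemma nodal_roots_eq_of_dvd_X_pow_card_sub_X [DecidableEq F] {P : F[X]} (hP : P.Monic)
    (hdvd : P ∣ X ^ Fintype.card F - X) : Lagrange.nodal P.roots.toFinset id = P := by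
  have hne : (X ^ Fintype.card F - X : F[X]) ≠ 0 :=
    FiniteField.X_pow_card_sub_X_ne_zero F Fintype.one_lt_card
  have hsplits : (X ^ Fintype.card F - X : F[X]).Splits := by
    rw [splits_iff_card_roots, FiniteField.roots_X_pow_card_sub_X,
      FiniteField.X_pow_card_sub_X_natDegree_eq F Fintype.one_lt_card]
    rfl
  have hnodup : P.roots.Nodup := by
    refine Multiset.nodup_of_le (roots.le_of_dvd hne hdvd) ?_
    rw [FiniteField.roots_X_pow_card_sub_X]
    exact univ.nodup
  conv_rhs => rw [(hsplits.of_dvd hne hdvd).eq_prod_roots_of_monic hP]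
  rw [Lagrange.nodal_eq, prod_multiset_map_count]
  refine prod_congr rfl fun a ha => ?_
  rw [Multiset.count_eq_one_of_mem hnodup (Multiset.mem_toFinset.1 ha), pow_one, id]

lemma exists_card_eq_nodal_dvd {Q : F[X]} (hQ : Q.Monic) (hdvd : Q ∣ X ^ Fintype.card F - X)
    {s : ℕ} (hs : s ≤ Q.natDegree) :
    ∃ T : Finset F, #T = s ∧ Lagrange.nodal T id ∣ Q := by
  classical
  have hnodal := nodal_roots_eq_of_dvd_X_pow_card_sub_X hQ hdvd
  obtain ⟨T, hTsub, hT⟩ : ∃ T ⊆ Q.roots.toFinset, #T = s := by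
    refine exists_subset_card_eq ?_
    rwa [← Lagrange.natDegree_nodal (v := (id : F → F)), hnodal]
  refine ⟨T, hT, ?_⟩
  rw [← hnodal]
  exact prod_dvd_prod_of_subset _ _ _ hTsub

lemma exists_isMDSAlmostSelfDual_of_dvd_X_pow_card_sub_X [DecidableEq F] {n : ℕ} (hn : Even n)
    (hn0 : 0 < n) {P : F[X]} (hP : P.Monic) (hdeg : P.natDegree = n + 1)
    (hdvd : P ∣ X ^ Fintype.card F - X)
    (hsq : ∀ a, P.IsRoot a → IsSquare ((derivative P).eval a)) :
    ∃ C : Submodule F (Fin (n + 1) → F), IsMDSAlmostSelfDual C := by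
  have hnodal := nodal_roots_eq_of_dvd_X_pow_card_sub_X hP hdvd
  refine exists_isMDSAlmostSelfDual_of_isSquare_derivative_nodal hn hn0 (S := P.roots.toFinset) ?_
    fun a ha => ?_
  · rw [← hdeg, ← Lagrange.natDegree_nodal (v := (id : F → F)), hnodal]
  · rw [hnodal]
    exact hsq a (isRoot_of_mem_roots (Multiset.mem_toFinset.1 ha))

lemma exists_ringHom_eq_pow {r k : ℕ} (hF : Fintype.card F = r ^ k) (hk : k ≠ 0) :
    ∃ σ : F →+* F, ∀ x, σ x = x ^ r := by
  obtain ⟨p, _, m, hp, hcard⟩ := FiniteField.card' F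
  have : Fact p.Prime := ⟨hp⟩
  obtain ⟨j, -, rfl⟩ := (Nat.dvd_prime_pow hp).1 (hcard ▸ hF ▸ dvd_pow_self r hk)
  exact ⟨iterateFrobenius F p j, iterateFrobenius_def p j⟩

end FiniteField

section Squares

variable {F : Type*} [Field F] {r : ℕ}

lemma pow_eq_inv_of_pow_half_eq_one (hr : Odd r) {a : F} (ha : a ^ ((r + 1) / 2) = 1) :
    a ^ r = a⁻¹ := by
  refine eq_inv_of_mul_eq_one_left ?_
  rw [← pow_succ, ← Nat.div_mul_cancel hr.add_one.two_dvd, pow_mul, ha, one_pow]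

lemma ne_zero_of_pow_half_eq_one (hr : Odd r) {a : F} (ha : a ^ ((r + 1) / 2) = 1) : a ≠ 0 := by
  rintro rfl
  obtain ⟨m, rfl⟩ := hr
  rw [zero_pow (by omega)] at ha
  exact zero_ne_one ha

variable [Fintype F] {σ : F →+* F}

lemma isSquare_of_pow_eq_mul (hF : Fintype.card F = r ^ 2) (hr : Odd r) {x y : F}
    (hxy : x ^ r = y * x) (hy : y ^ ((r + 1) / 2) = 1) : IsSquare x := by
  rcases eq_or_ne x 0 with rfl | hx
  · exact IsSquare.zero
  have hchar : ringChar F ≠ 2 := by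
    rw [Ne, FiniteField.even_card_iff_char_two, hF, ← Nat.even_iff, Nat.not_even_iff_odd]
    exact hr.pow
  obtain ⟨m, rfl⟩ := hr
  have hhalf : (2 * m + 1 + 1) / 2 = m + 1 := by omega
  have hcard : (2 * m + 1) ^ 2 / 2 = 2 * m * (m + 1) := by
    rw [show (2 * m + 1) ^ 2 = 1 + 2 * (2 * m * (m + 1)) by ring, Nat.add_mul_div_left _ _ two_pos]
    simp
  have hpow : x ^ (2 * m) = y := mul_right_cancel₀ hx (by rw [← pow_succ, hxy])
  rw [FiniteField.isSquare_iff hchar hx, hF, hcard, pow_mul, hpow, ← hhalf, hy]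

lemma isSquare_of_mem_eqLocusField (hF : Fintype.card F = r ^ 2) (hr : Odd r)
    (hσ : ∀ x, σ x = x ^ r) {x : F} (hx : x ∈ σ.eqLocusField (RingHom.id F)) : IsSquare x :=
  isSquare_of_pow_eq_mul hF hr (by rw [← hσ, one_mul]; exact hx) (one_pow _)

lemma isSquare_neg_one (hF : Fintype.card F = r ^ 2) (hr : Odd r) : IsSquare (-1 : F) :=
  isSquare_of_pow_eq_mul hF hr (by rw [hr.neg_one_pow, one_mul]) (one_pow _)

lemma isSquare_of_pow_half_eq_one (hF : Fintype.card F = r ^ 2) (hr : Odd r) {a : F}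
    (ha : a ^ ((r + 1) / 2) = 1) : IsSquare a := by
  have ha0 := ne_zero_of_pow_half_eq_one hr ha
  refine isSquare_of_pow_eq_mul hF hr (y := (a * a)⁻¹) ?_ ?_
  · rw [pow_eq_inv_of_pow_half_eq_one hr ha]
    field_simp
  · rw [inv_pow, mul_pow, ha, one_mul, inv_one]

lemma isSquare_add_of_pow_half_eq_one (hF : Fintype.card F = r ^ 2) (hr : Odd r)
    (hσ : ∀ x, σ x = x ^ r) {a b : F} (ha : a ^ ((r + 1) / 2) = 1) (hb : b ^ ((r + 1) / 2) = 1) :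
    IsSquare (a + b) := by
  have ha0 := ne_zero_of_pow_half_eq_one hr ha
  have hb0 := ne_zero_of_pow_half_eq_one hr hb
  refine isSquare_of_pow_eq_mul hF hr (y := (a * b)⁻¹) ?_ ?_
  · rw [← hσ, map_add, hσ, hσ, pow_eq_inv_of_pow_half_eq_one hr ha,
      pow_eq_inv_of_pow_half_eq_one hr hb]
    field_simp
    ring
  · rw [inv_pow, mul_pow, ha, hb, one_mul, inv_one]

/- A single difference satisfies `(a - b) ^ r = -(a * b)⁻¹ * (a - b)`, and `-1` is a
`(r + 1) / 2`-th root of unity only if `4 ∣ r + 1`; in the product the signs may cancel instead. -/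
lemma isSquare_prod_sub_of_pow_half_eq_one (hF : Fintype.card F = r ^ 2) (hr : Odd r)
    (hσ : ∀ x, σ x = x ^ r) {T : Finset F} (hT : Even (#T * ((r + 1) / 2))) {a : F}
    (ha : a ^ ((r + 1) / 2) = 1) (hb : ∀ b ∈ T, b ^ ((r + 1) / 2) = 1) :
    IsSquare (∏ b ∈ T, (a - b)) := by
  have ha0 := ne_zero_of_pow_half_eq_one hr ha
  refine isSquare_of_pow_eq_mul hF hr (y := ∏ b ∈ T, -(a * b)⁻¹) ?_ ?_
  · rw [← prod_pow, ← prod_mul_distrib]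
    refine prod_congr rfl fun b hbT => ?_
    have hb0 := ne_zero_of_pow_half_eq_one hr (hb b hbT)
    rw [← hσ, map_sub, hσ, hσ, pow_eq_inv_of_pow_half_eq_one hr ha,
      pow_eq_inv_of_pow_half_eq_one hr (hb b hbT)]
    field_simp
    ring
  · have hfactor : ∀ b ∈ T, (-(a * b)⁻¹) ^ ((r + 1) / 2) = (-1) ^ ((r + 1) / 2) := fun b hbT => by
      rw [neg_pow, inv_pow, mul_pow, ha, hb b hbT, one_mul, inv_one, mul_one]
    rw [← prod_pow, prod_congr rfl hfactor, prod_const, ← pow_mul, mul_comm, hT.neg_one_pow]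

end Squares

section Points

open Lagrange

variable {F : Type*} [Field F]

/-- The polynomial whose roots are the evaluation points: `0`, the `f₁`-th roots of the elements of
`T₁`, and the `f₂`-th roots of the elements of `T₂`. -/
noncomputable def pointPoly (f₁ f₂ : ℕ) (T₁ T₂ : Finset F) : F[X] :=
  X * expand F f₁ (nodal T₁ id) * expand F f₂ (nodal T₂ id)

variable {f₁ f₂ : ℕ} {T₁ T₂ : Finset F}

lemma pointPoly_comm (f₁ f₂ : ℕ) (T₁ T₂ : Finset F) :
    pointPoly f₁ f₂ T₁ T₂ = pointPoly f₂ f₁ T₂ T₁ :=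
  mul_right_comm _ _ _

lemma pointPoly_monic (hf₁ : 0 < f₁) (hf₂ : 0 < f₂) : (pointPoly f₁ f₂ T₁ T₂).Monic :=
  (monic_X.mul (nodal_monic.expand hf₁)).mul (nodal_monic.expand hf₂)

lemma natDegree_pointPoly (hf₁ : 0 < f₁) (hf₂ : 0 < f₂) :
    (pointPoly f₁ f₂ T₁ T₂).natDegree = #T₁ * f₁ + #T₂ * f₂ + 1 := by
  have hE₁ := nodal_monic (s := T₁) (v := id) |>.expand hf₁
  have hE₂ := nodal_monic (s := T₂) (v := id) |>.expand hf₂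
  rw [pointPoly, (monic_X.mul hE₁).natDegree_mul hE₂, monic_X.natDegree_mul hE₁, natDegree_X,
    natDegree_expand, natDegree_expand, natDegree_nodal, natDegree_nodal]
  ring

lemma isRoot_pointPoly_iff {a : F} :
    (pointPoly f₁ f₂ T₁ T₂).IsRoot a ↔ a = 0 ∨ a ^ f₁ ∈ T₁ ∨ a ^ f₂ ∈ T₂ := by
  simp [pointPoly, IsRoot, expand_eval, eval_nodal, prod_eq_zero_iff, sub_eq_zero, or_assoc]

lemma eval_zero_derivative_pointPoly (hf₁ : 0 < f₁) (hf₂ : 0 < f₂) :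
    (derivative (pointPoly f₁ f₂ T₁ T₂)).eval 0 = (∏ c ∈ T₁, -c) * ∏ d ∈ T₂, -d := by
  simp [pointPoly, expand_eval, eval_nodal, hf₁.ne', hf₂.ne', derivative_mul]

lemma eval_derivative_pointPoly [DecidableEq F] (hf₁ : 0 < f₁) {a : F} (ha : a ^ f₁ ∈ T₁) :
    (derivative (pointPoly f₁ f₂ T₁ T₂)).eval a =
      f₁ * a ^ f₁ * (∏ c ∈ T₁.erase (a ^ f₁), (a ^ f₁ - c)) * ∏ d ∈ T₂, (a ^ f₂ - d) := by
  have hroot : (nodal T₁ id).eval (a ^ f₁) = 0 := eval_nodal_at_node (v := id) ha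
  have hderiv : (derivative (nodal T₁ id)).eval (a ^ f₁) =
      ∏ c ∈ T₁.erase (a ^ f₁), (a ^ f₁ - c) := by
    exact (eval_nodal_derivative_eval_node_eq (v := id) ha).trans eval_nodal
  rw [pointPoly]
  simp only [derivative_mul, derivative_expand, derivative_X, eval_add, eval_mul, expand_eval,
    hroot, hderiv, eval_nodal, eval_X, eval_pow, eval_natCast, id]
  rw [← mul_pow_sub_one hf₁.ne' a]
  ring

lemma pointPoly_dvd {D₁ D₂ : ℕ} (hN : f₁ * D₁ = f₂ * D₂) (hT₁ : nodal T₁ id ∣ X ^ D₁ - 1)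
    (hT₂ : nodal T₂ id ∣ X ^ D₂ + 1) :
    pointPoly f₁ f₂ T₁ T₂ ∣ X * (X ^ (2 * (f₁ * D₁)) - 1) := by
  have h₁ : expand F f₁ (nodal T₁ id) ∣ X ^ (f₁ * D₁) - 1 := by
    simpa [← pow_mul] using map_dvd (expand F f₁) hT₁
  have h₂ : expand F f₂ (nodal T₂ id) ∣ X ^ (f₁ * D₁) + 1 := by
    simpa [← pow_mul, hN] using map_dvd (expand F f₂) hT₂
  calc pointPoly f₁ f₂ T₁ T₂
      ∣ X * (X ^ (f₁ * D₁) - 1) * (X ^ (f₁ * D₁) + 1) :=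
        mul_dvd_mul (mul_dvd_mul_left X h₁) h₂
    _ = X * (X ^ (2 * (f₁ * D₁)) - 1) := by ring

variable [Fintype F] {r : ℕ} {σ : F →+* F}

lemma isSquare_eval_zero_derivative_pointPoly (hF : Fintype.card F = r ^ 2) (hr : Odd r)
    (hσ : ∀ x, σ x = x ^ r) (hf₁ : 0 < f₁) (hf₂ : 0 < f₂)
    (hT₁ : ∀ c ∈ T₁, c ^ ((r + 1) / 2) = 1)
    (hT₂ : ∀ d ∈ T₂, d ∈ σ.eqLocusField (RingHom.id F)) :
    IsSquare ((derivative (pointPoly f₁ f₂ T₁ T₂)).eval 0) := by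
  rw [eval_zero_derivative_pointPoly hf₁ hf₂]
  refine (isSquare_prod _ fun c hc => ?_).mul (isSquare_prod _ fun d hd => ?_)
  · rw [← neg_one_mul]
    exact (isSquare_neg_one hF hr).mul (isSquare_of_pow_half_eq_one hF hr (hT₁ c hc))
  · exact isSquare_of_mem_eqLocusField hF hr hσ (neg_mem (hT₂ d hd))

lemma isSquare_eval_derivative_pointPoly_left (hF : Fintype.card F = r ^ 2) (hr : Odd r)
    (hσ : ∀ x, σ x = x ^ r) (hf₁ : 0 < f₁) (hcard : Even ((#T₁ - 1) * ((r + 1) / 2)))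
    (hT₁ : ∀ c ∈ T₁, c ^ ((r + 1) / 2) = 1)
    (hT₂ : ∀ d ∈ T₂, d ∈ σ.eqLocusField (RingHom.id F)) {a : F} (ha₁ : a ^ f₁ ∈ T₁)
    (ha₂ : a ^ f₂ ∈ σ.eqLocusField (RingHom.id F)) :
    IsSquare ((derivative (pointPoly f₁ f₂ T₁ T₂)).eval a) := by
  classical
  rw [eval_derivative_pointPoly hf₁ ha₁]
  refine ((IsSquare.mul ?_ ?_).mul ?_).mul ?_
  · exact isSquare_of_mem_eqLocusField hF hr hσ (natCast_mem _ f₁)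
  · exact isSquare_of_pow_half_eq_one hF hr (hT₁ _ ha₁)
  · exact isSquare_prod_sub_of_pow_half_eq_one hF hr hσ (by rwa [card_erase_of_mem ha₁])
      (hT₁ _ ha₁) fun c hc => hT₁ c (mem_of_mem_erase hc)
  · exact isSquare_of_mem_eqLocusField hF hr hσ (prod_mem fun d hd => sub_mem ha₂ (hT₂ d hd))

lemma isSquare_eval_derivative_pointPoly_right (hF : Fintype.card F = r ^ 2) (hr : Odd r)
    (hσ : ∀ x, σ x = x ^ r) (hf₂ : 0 < f₂) (hT₁ : ∀ c ∈ T₁, c ^ ((r + 1) / 2) = 1)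
    (hT₂ : ∀ d ∈ T₂, d ∈ σ.eqLocusField (RingHom.id F)) {b : F}
    (hb₁ : (-b ^ f₁) ^ ((r + 1) / 2) = 1) (hb₂ : b ^ f₂ ∈ T₂) :
    IsSquare ((derivative (pointPoly f₁ f₂ T₁ T₂)).eval b) := by
  classical
  rw [pointPoly_comm, eval_derivative_pointPoly hf₂ hb₂]
  refine (isSquare_of_mem_eqLocusField hF hr hσ ?_).mul (isSquare_prod _ fun c hc => ?_)
  · exact mul_mem (mul_mem (natCast_mem _ f₂) (hT₂ _ hb₂))
      (prod_mem fun d hd => sub_mem (hT₂ _ hb₂) (hT₂ d (mem_of_mem_erase hd)))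
  · rw [show b ^ f₁ - c = -1 * (-b ^ f₁ + c) by ring]
    exact (isSquare_neg_one hF hr).mul
      (isSquare_add_of_pow_half_eq_one hF hr hσ hb₁ (hT₁ c hc))

end Points

section Construction

open Lagrange

lemma pow_half_eq_one_of_pow_eq_one {M : Type*} [Monoid M] {r D : ℕ} (hD : 2 * D ∣ r + 1) {x : M}
    (hx : x ^ D = 1) : x ^ ((r + 1) / 2) = 1 := by
  obtain ⟨m, hm⟩ := Nat.dvd_div_of_mul_dvd hD
  rw [hm, pow_mul, hx, one_pow]

lemma isRoot_of_nodal_id_dvd {R : Type*} [CommRing R] {T : Finset R} {Q : R[X]}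
    (h : nodal T id ∣ Q) {c : R} (hc : c ∈ T) : Q.IsRoot c :=
  IsRoot.dvd (eval_nodal_at_node (v := id) hc) h

variable {F : Type*} [Field F] [Fintype F] {r f₁ f₂ D₁ D₂ : ℕ}

lemma X_mul_X_pow_sub_one_dvd {m : ℕ} (hm : m ∣ Fintype.card F - 1) :
    (X * (X ^ m - 1) : F[X]) ∣ X ^ Fintype.card F - X := by
  obtain ⟨j, hj⟩ := hm
  have hfactor : (X ^ Fintype.card F - X : F[X]) = X * ((X ^ m) ^ j - 1 ^ j) := by
    rw [one_pow, ← pow_mul, ← hj, mul_sub, mul_one, ← pow_succ',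
      Nat.sub_add_cancel Fintype.card_pos]
  exact hfactor ▸ mul_dvd_mul_left X (sub_dvd_pow_sub_pow _ _ _)

lemma exists_card_eq_nodal_dvd_X_pow_sub_one {D s : ℕ} (hD0 : D ≠ 0)
    (hD : D ∣ Fintype.card F - 1) (hs : s ≤ D) :
    ∃ T : Finset F, #T = s ∧ nodal T id ∣ X ^ D - 1 := by
  refine exists_card_eq_nodal_dvd (monic_X_pow_sub_C 1 hD0) ?_ (by rwa [natDegree_X_pow_sub_C])
  exact (dvd_mul_left _ X).trans (X_mul_X_pow_sub_one_dvd hD)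

lemma exists_card_eq_nodal_dvd_X_pow_add_one {D t : ℕ} (hD0 : D ≠ 0)
    (hD : 2 * D ∣ Fintype.card F - 1) (ht : t ≤ D) :
    ∃ T : Finset F, #T = t ∧ nodal T id ∣ X ^ D + 1 := by
  refine exists_card_eq_nodal_dvd (monic_X_pow_add_C 1 hD0) ?_ (by rwa [natDegree_X_pow_add_C])
  exact Dvd.dvd.trans ⟨X * (X ^ D - 1), by simp; ring⟩ (X_mul_X_pow_sub_one_dvd hD)

lemma isSquare_eval_derivative_pointPoly {T₁ T₂ : Finset F} (hF : Fintype.card F = r ^ 2)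
    (hr : Odd r) (hf₁ : 0 < f₁) (hf₂ : 0 < f₂) (hN : f₁ * D₁ = f₂ * D₂) (hodd : Odd D₁)
    (hD₁ : 2 * D₁ ∣ r + 1) (hD₂ : 2 * D₂ ∣ r - 1)
    (hcard : Even ((#T₁ - 1) * ((r + 1) / 2)))
    (hT₁ : ∀ c ∈ T₁, c ^ D₁ = 1) (hT₂ : ∀ d ∈ T₂, d ^ D₂ = -1) {a : F}
    (ha : (pointPoly f₁ f₂ T₁ T₂).IsRoot a) :
    IsSquare ((derivative (pointPoly f₁ f₂ T₁ T₂)).eval a) := by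
  obtain ⟨σ, hσ⟩ := exists_ringHom_eq_pow hF two_ne_zero
  have hfixed : ∀ {x : F}, (x ^ D₂) ^ 2 = 1 → x ∈ σ.eqLocusField (RingHom.id F) := by
    intro x hx
    obtain ⟨m, hm⟩ := hD₂
    rw [RingHom.mem_eqLocusField, hσ, RingHom.id_apply, ← Nat.sub_add_cancel hr.pos, hm, pow_succ,
      mul_comm 2, pow_mul, pow_mul, hx, one_pow, one_mul]
  have hT₁' : ∀ c ∈ T₁, c ^ ((r + 1) / 2) = 1 := fun c hc =>
    pow_half_eq_one_of_pow_eq_one hD₁ (hT₁ c hc)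
  have hT₂' : ∀ d ∈ T₂, d ∈ σ.eqLocusField (RingHom.id F) := fun d hd =>
    hfixed (by rw [hT₂ d hd, neg_one_sq])
  have hpow : (a ^ f₁) ^ D₁ = (a ^ f₂) ^ D₂ := by rw [← pow_mul, ← pow_mul, hN]
  rcases isRoot_pointPoly_iff.1 ha with rfl | ha₁ | ha₂
  · exact isSquare_eval_zero_derivative_pointPoly hF hr hσ hf₁ hf₂ hT₁' hT₂'
  · refine isSquare_eval_derivative_pointPoly_left hF hr hσ hf₁ hcard hT₁' hT₂' ha₁ (hfixed ?_)
    rw [← hpow, hT₁ _ ha₁, one_pow]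
  · refine isSquare_eval_derivative_pointPoly_right hF hr hσ hf₂ hT₁' hT₂' ?_ ha₂
    refine pow_half_eq_one_of_pow_eq_one hD₁ ?_
    rw [hodd.neg_pow, hpow, hT₂ _ ha₂, neg_neg]

theorem exists_isMDSAlmostSelfDual [DecidableEq F] (hF : Fintype.card F = r ^ 2) (hr : Odd r)
    (hN : f₁ * D₁ = f₂ * D₂) (hq : 2 * (f₁ * D₁) ∣ r ^ 2 - 1) (hodd : Odd D₁)
    (hD₁ : 2 * D₁ ∣ r + 1) (hD₂ : 2 * D₂ ∣ r - 1) {s t : ℕ} (hs0 : 0 < s) (hs : s ≤ D₁)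
    (ht : t ≤ D₂) (hparity : Even ((s - 1) * ((r + 1) / 2))) (hn : Even (s * f₁ + t * f₂)) :
    ∃ C : Submodule F (Fin (s * f₁ + t * f₂ + 1) → F), IsMDSAlmostSelfDual C := by
  have hN0 : f₁ * D₁ ≠ 0 := fun h => by
    have hcard := Fintype.one_lt_card (α := F)
    rw [h, mul_zero, zero_dvd_iff, ← hF] at hq
    omega
  obtain ⟨hf₁, hD₁0⟩ := mul_ne_zero_iff.1 hN0
  obtain ⟨hf₂, hD₂0⟩ := mul_ne_zero_iff.1 (hN ▸ hN0)
  have hf₁ := Nat.pos_of_ne_zero hf₁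
  have hf₂ := Nat.pos_of_ne_zero hf₂
  have hfactor : Fintype.card F - 1 = (r + 1) * (r - 1) := by
    rw [hF, ← Nat.sq_sub_sq, one_pow]
  obtain ⟨T₁, rfl, hT₁⟩ := exists_card_eq_nodal_dvd_X_pow_sub_one (F := F) hD₁0
    (hfactor ▸ ((dvd_mul_left _ 2).trans hD₁).mul_right _) hs
  obtain ⟨T₂, rfl, hT₂⟩ := exists_card_eq_nodal_dvd_X_pow_add_one (F := F) hD₂0
    (hfactor ▸ hD₂.mul_left _) ht
  refine exists_isMDSAlmostSelfDual_of_dvd_X_pow_card_sub_X hn (by positivity)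
    (pointPoly_monic hf₁ hf₂) (natDegree_pointPoly hf₁ hf₂)
    ((pointPoly_dvd hN hT₁ hT₂).trans (X_mul_X_pow_sub_one_dvd (hF ▸ hq))) fun a ha => ?_
  refine isSquare_eval_derivative_pointPoly hF hr hf₁ hf₂ hN hodd hD₁ hD₂ hparity
    (fun c hc => ?_) (fun d hd => ?_) ha
  · simpa [sub_eq_zero] using isRoot_of_nodal_id_dvd hT₁ hc
  · simpa [add_eq_zero_iff_eq_neg] using isRoot_of_nodal_id_dvd hT₂ hd

end Construction

lemma even_of_mod_two_pow_succ_eq {e l : ℕ} (hl : l ≠ 0) (he : e % 2 ^ (l + 1) = 2 ^ l) :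
    Even e := by
  rw [even_iff_two_dvd, ← Nat.dvd_mod_iff (dvd_pow_self 2 l.succ_ne_zero), he]
  exact dvd_pow_self 2 hl

lemma odd_div_gcd_of_mod_two_pow_succ_eq {e₁ e₂ l : ℕ} (he₁ : e₁ % 2 ^ (l + 1) = 2 ^ l)
    (he₂ : 2 ^ l ∣ e₂) : Odd (e₁ / e₁.gcd e₂) := by
  by_contra heven
  rw [Nat.not_odd_iff_even, even_iff_two_dvd] at heven
  have hdvd : 2 ^ l ∣ e₁ :=
    (Nat.dvd_mod_iff (pow_dvd_pow 2 l.le_succ)).1 he₁.symm.dvd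
  have hsucc : 2 ^ (l + 1) ∣ e₁ := by
    rw [pow_succ, ← Nat.mul_div_cancel' (Nat.gcd_dvd_left e₁ e₂)]
    exact mul_dvd_mul (Nat.dvd_gcd hdvd he₂) heven
  rw [Nat.mod_eq_zero_of_dvd hsucc] at he₁
  exact (pow_ne_zero l two_ne_zero) he₁.symm

/- With `e₁ = D₁ g` and `e₂ = D₂ g`, the divisibility hypotheses amount to `2 D₁ ∣ r + 1` and
`2 D₂ ∣ r - 1`. -/
theorem mds_almost_self_dual_even_length_succ_general {r e₁ f₁ e₂ f₂ s t : ℕ} (hr : Odd r)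
    (hq₁ : r ^ 2 - 1 = e₁ * f₁) (hq₂ : r ^ 2 - 1 = e₂ * f₂) (he₁ : Even e₁)
    (hodd : Odd (e₁ / e₁.gcd e₂)) (hdvd₁ : 2 * e₂ ∣ e₁ * (r - 1)) (hdvd₂ : e₁ ∣ e₂ * (r + 1))
    (hs0 : 1 ≤ s) (hs : s ≤ e₁ / e₁.gcd e₂) (ht : t ≤ e₂ / e₁.gcd e₂)
    (h4 : 4 ∣ (s - 1) * (r + 1)) (hn : Even (s * f₁ + t * f₂))
    {F : Type*} [Field F] [Fintype F] [DecidableEq F] (hF : Fintype.card F = r ^ 2) :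
    ∃ C : Submodule F (Fin (s * f₁ + t * f₂ + 1) → F), IsMDSAlmostSelfDual C := by
  have hg : 0 < e₁.gcd e₂ := Nat.pos_of_ne_zero fun h => by simp [h] at hodd
  have hcoprime := Nat.coprime_div_gcd_div_gcd hg
  have h₁ := Nat.div_mul_cancel (Nat.gcd_dvd_left e₁ e₂)
  have h₂ := Nat.div_mul_cancel (Nat.gcd_dvd_right e₁ e₂)
  generalize e₁.gcd e₂ = g, e₁ / e₁.gcd e₂ = D₁, e₂ / e₁.gcd e₂ = D₂ at *
  subst h₁ h₂
  have hgeven : 2 ∣ g := ((Nat.even_mul.1 he₁).resolve_left (Nat.not_even_iff_odd.2 hodd)).two_dvd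
  have hD₁ : D₁ ∣ r + 1 := by
    refine hcoprime.dvd_of_dvd_mul_left (Nat.dvd_of_mul_dvd_mul_right hg ?_)
    rwa [mul_right_comm]
  have hD₂ : 2 * D₂ ∣ r - 1 := by
    have hcoprime' : (2 * D₂).Coprime D₁ := hodd.coprime_two_left.mul_left hcoprime.symm
    refine hcoprime'.dvd_of_dvd_mul_left (Nat.dvd_of_mul_dvd_mul_right hg ?_)
    rwa [mul_assoc, mul_right_comm]
  have hN : f₁ * D₁ = f₂ * D₂ := by
    refine Nat.eq_of_mul_eq_mul_right hg ?_
    linarith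
  have hq : 2 * (f₁ * D₁) ∣ r ^ 2 - 1 := by
    rw [hq₁, mul_comm f₁, mul_right_comm, mul_comm 2]
    exact mul_dvd_mul_left _ hgeven
  have hparity : Even ((s - 1) * ((r + 1) / 2)) := by
    rw [← Nat.mul_div_assoc _ hr.add_one.two_dvd, even_iff_two_dvd]
    exact Nat.dvd_div_of_mul_dvd h4
  exact exists_isMDSAlmostSelfDual hF hr hN hq hodd
    (hodd.coprime_two_left.mul_dvd_of_dvd_of_dvd hr.add_one.two_dvd hD₁) hD₂ hs0 hs ht hparity hn

/-- Theorem 5.1(2): if `n₁ = s·f₁ + t·f₂` is even, there is a `q`-ary MDS almost self-dual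
code of length `n₁ + 1`, where `q = r²`. -/
theorem mds_almost_self_dual_even_length_succ
    (r e1 f1 e2 f2 s t l : ℕ)
    (hr_odd : Odd r) (hr_pp : IsPrimePow r)
    (hq1 : r ^ 2 - 1 = e1 * f1) (hq2 : r ^ 2 - 1 = e2 * f2)
    (hl : 2 ≤ l) (he1 : e1 % 2 ^ (l + 1) = 2 ^ l) (he2 : 2 ^ l ∣ e2)
    (hdvd1 : 2 * e2 ∣ e1 * (r - 1)) (hdvd2 : e1 ∣ e2 * (r + 1))
    (hs1 : 1 ≤ s) (hs2 : s ≤ e1 / Nat.gcd e1 e2)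
    (ht1 : 1 ≤ t) (ht2 : t ≤ e2 / Nat.gcd e1 e2)
    (h4 : 4 ∣ (s - 1) * (r + 1))
    (hn1 : Even (s * f1 + t * f2))
    (F : Type*) [Field F] [Fintype F] [DecidableEq F]
    (hF : Fintype.card F = r ^ 2) :
    ∃ C : Submodule F (Fin (s * f1 + t * f2 + 1) → F),
      Module.finrank F C = (s * f1 + t * f2) / 2 ∧
      C ≤ dualCode C ∧
      Module.finrank F (dualCode C) = Module.finrank F C + 1 ∧
      IsMinDist C ((s * f1 + t * f2) / 2 + 2) := by
  exact mds_almost_self_dual_even_length_succ_general hr_odd hq1 hq2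
    (even_of_mod_two_pow_succ_eq (by omega) he1) (odd_div_gcd_of_mod_two_pow_succ_eq he1 he2)
    hdvd1 hdvd2 hs1 hs2 ht2 h4 hn1 hF
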